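/- Let r ≥ 3 and k ≥ 3 be integers and set s = r·k/gcd(r,k). If m is a positive integer with m ∈ D_{r,k}, then s·m + 1 ∈ D_{r,k}. -/

import Mathlib

open SimpleGraph

/-- A `(v, b, r, k)`-combinatorial configuration: a bipartite simple graph on
`Fin v ⊕ Fin b` (left part `Fin v`, right part `Fin b`), connected (here:
preconnected, so that the empty graph counts as a configuration), where every
left vertex has degree `r`, every right vertex has degree `k`, and there is no
cycle of length `4`. -/
def IsConfiguration (v b r k : ℕ) (G : SimpleGraph (Fin v ⊕ Fin b)) : Prop :=
  (∀ i j : Fin v, ¬ G.Adj (Sum.inl i) (Sum.inl j)) ∧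
  (∀ i j : Fin b, ¬ G.Adj (Sum.inr i) (Sum.inr j)) ∧
  G.Preconnected ∧
  (∀ i : Fin v, (G.neighborSet (Sum.inl i)).ncard = r) ∧
  (∀ j : Fin b, (G.neighborSet (Sum.inr j)).ncard = k) ∧
  (∀ (x : Fin v ⊕ Fin b) (c : G.Walk x x), c.IsCycle → c.length ≠ 4)

/-- The tuple `(v, b, r, k)` is configurable if a `(v,b,r,k)`-combinatorial
configuration exists. -/
def Configurable (v b r k : ℕ) : Prop :=
  ∃ G : SimpleGraph (Fin v ⊕ Fin b), IsConfiguration v b r k G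

/-- `D r k` is the set of `d ∈ ℕ` such that
`(d·k/gcd(r,k), d·r/gcd(r,k), r, k)` is configurable. -/
def D (r k : ℕ) : Set ℕ :=
  {d | Configurable (d * k / Nat.gcd r k) (d * r / Nat.gcd r k) r k}


/-- The bipartite graph attached to a relation. -/
def relGraph {A B : Type} (R : A → B → Prop) : SimpleGraph (A ⊕ B) where
  Adj u w := (∃ a b, R a b ∧ u = Sum.inl a ∧ w = Sum.inr b) ∨
    (∃ a b, R a b ∧ w = Sum.inl a ∧ u = Sum.inr b)
  symm := ⟨fun _ _ h => h.symm⟩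
  loopless := ⟨by
    rintro u (⟨a, b, _, h, h'⟩ | ⟨a, b, _, h, h'⟩) <;> simp [h] at h'⟩

lemma relGraph_lr {A B : Type} (R : A → B → Prop) (a : A) (b : B) :
    (relGraph R).Adj (Sum.inl a) (Sum.inr b) ↔ R a b := by
  simp [relGraph]

lemma relGraph_rl {A B : Type} (R : A → B → Prop) (a : A) (b : B) :
    (relGraph R).Adj (Sum.inr b) (Sum.inl a) ↔ R a b := by
  simp [relGraph]

lemma relGraph_ll {A B : Type} (R : A → B → Prop) (a a' : A) :
    ¬ (relGraph R).Adj (Sum.inl a) (Sum.inl a') := by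
  simp [relGraph]

lemma relGraph_rr {A B : Type} (R : A → B → Prop) (b b' : B) :
    ¬ (relGraph R).Adj (Sum.inr b) (Sum.inr b') := by
  simp [relGraph]

/-- A relational configuration. -/
structure RelConf {A B : Type} (r k : ℕ) (R : A → B → Prop) : Prop where
  conn : (relGraph R).Preconnected
  degl : ∀ a, {b | R a b}.ncard = r
  degr : ∀ b, {a | R a b}.ncard = k
  rect : ∀ a a' b b', R a b → R a b' → R a' b → R a' b' → a = a' ∨ b = b'

lemma four_cycle {V : Type} (G : SimpleGraph V)
    (h : ∀ a b c d, G.Adj a b → G.Adj b c → G.Adj c d → G.Adj d a → a = c ∨ b = d)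
    (x : V) (p : G.Walk x x) (hp : p.IsCycle) : p.length ≠ 4 := by
  intro hl
  match p, hp, hl with
  | .cons h1 (.cons h2 (.cons h3 (.cons h4 .nil))), hp, hl =>
    have hn := hp.support_nodup
    have := h _ _ _ _ h1 h2 h3 h4
    simp at hn
    rcases this with e | e
    · subst e; simp at hn
    · subst e; simp at hn

lemma four_cycle' {V : Type} (G : SimpleGraph V)
    (h : ∀ (x : V) (p : G.Walk x x), p.IsCycle → p.length ≠ 4)
    {a b c d : V} (h1 : G.Adj a b) (h2 : G.Adj b c) (h3 : G.Adj c d) (h4 : G.Adj d a) :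
    a = c ∨ b = d := by
  by_contra! hne
  obtain ⟨n1, n2⟩ := hne
  refine h a (.cons h1 (.cons h2 (.cons h3 (.cons h4 .nil)))) ?_ rfl
  have := h1.ne
  have := h2.ne
  have := h3.ne
  have := h4.ne
  rw [SimpleGraph.Walk.cons_isCycle_iff]
  constructor
  · simp [SimpleGraph.Walk.cons_isPath_iff]
    grind
  · simp
    grind

lemma RelConf.of_conf {v b r k : ℕ} {G : SimpleGraph (Fin v ⊕ Fin b)}
    (h : IsConfiguration v b r k G) :
    RelConf r k (fun i j => G.Adj (Sum.inl i) (Sum.inr j)) := by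
  obtain ⟨hl, hr, hc, hdl, hdr, h4⟩ := h
  have hG : relGraph (fun i j => G.Adj (Sum.inl i) (Sum.inr j)) = G := by
    ext u w
    rcases u with u | u <;> rcases w with w | w
    · simp [relGraph_ll, hl]
    · simp [relGraph_lr]
    · simp [relGraph_rl, G.adj_comm]
    · simp [relGraph_rr, hr]
  refine ⟨by rw [hG]; exact hc, ?_, ?_, ?_⟩
  · intro a
    rw [← hdl a, ← Set.ncard_image_of_injective _ Sum.inr_injective]
    congr 1
    ext w
    rcases w with w | w <;> simp [hl]
  · intro a
    rw [← hdr a, ← Set.ncard_image_of_injective _ Sum.inl_injective]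
    congr 1
    ext w
    rcases w with w | w <;> simp [hr, G.adj_comm]
  · intro a a' b b' h1 h2 h3 h5
    rcases four_cycle' G h4 h1 h3.symm h5 h2.symm with e | e
    · exact Or.inl (Sum.inl_injective e)
    · exact Or.inr (Sum.inr_injective e)

lemma RelConf.configurable {A B : Type} [Fintype A] [Fintype B] {v b r k : ℕ}
    {R : A → B → Prop} (h : RelConf r k R) (hA : Fintype.card A = v)
    (hB : Fintype.card B = b) : Configurable v b r k := by
  let eA : Fin v ≃ A := (Fintype.equivFinOfCardEq hA).symm
  let eB : Fin b ≃ B := (Fintype.equivFinOfCardEq hB).symm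
  let R' : Fin v → Fin b → Prop := fun i j => R (eA i) (eB j)
  let iso : relGraph R' ≃g relGraph R :=
    { toEquiv := Equiv.sumCongr eA eB
      map_rel_iff' := by
        intro u w
        rcases u with u | u <;> rcases w with w | w <;>
          simp [relGraph_ll, relGraph_lr, relGraph_rl, relGraph_rr, R'] }
  refine ⟨relGraph R', relGraph_ll R', relGraph_rr R', ?_, ?_, ?_, ?_⟩
  · exact iso.preconnected_iff.mpr h.conn
  · intro i
    rw [← h.degl (eA i)]
    have : (relGraph R').neighborSet (Sum.inl i)
        = (fun y => Sum.inr (eB.symm y)) '' {y | R (eA i) y} := by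
      ext w
      rcases w with w | w
      · simp [relGraph_ll]
      · simp only [mem_neighborSet, relGraph_lr, R', Set.mem_image, Set.mem_ofPred_eq]
        constructor
        · intro hh; exact ⟨_, hh, by simp⟩
        · rintro ⟨y, hy, e⟩
          have := Sum.inr_injective e
          subst this; simpa using hy
    rw [this, Set.ncard_image_of_injective]
    intro y y' e
    exact eB.symm.injective (Sum.inr_injective e)
  · intro i
    rw [← h.degr (eB i)]
    have : (relGraph R').neighborSet (Sum.inr i)
        = (fun y => Sum.inl (eA.symm y)) '' {y | R y (eB i)} := by
      ext w
      rcases w with w | w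
      · simp only [mem_neighborSet, relGraph_rl, R', Set.mem_image, Set.mem_ofPred_eq]
        constructor
        · intro hh; exact ⟨_, hh, by simp⟩
        · rintro ⟨y, hy, e⟩
          have := Sum.inl_injective e
          subst this; simpa using hy
      · simp [relGraph_rr]
    rw [this, Set.ncard_image_of_injective]
    intro y y' e
    exact eA.symm.injective (Sum.inl_injective e)
  · apply four_cycle
    intro a b c d
    rcases a with a | a <;> rcases b with b | b <;> rcases c with c | c <;>
      rcases d with d | d <;>
      simp only [relGraph_ll, relGraph_lr, relGraph_rl, relGraph_rr, false_imp_iff,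
        imp_true_iff, R']
    · intro h1 h2 h3 h4
      have := h.rect _ _ _ _ h1 h4 h2 h3
      simpa using this
    · intro h1 h2 h3 h4
      have := h.rect _ _ _ _ h1 h2 h4 h3
      simpa using this.symm

/-- A configuration with both degrees at least two has a non-bridge. -/
lemma RelConf.exists_nonbridge {A B : Type} [Fintype A] [Fintype B] {r k : ℕ}
    {R : A → B → Prop} (h : RelConf r k R) (hr : 2 ≤ r) (hk : 2 ≤ k) [Nonempty A] :
    ∃ x y, R x y ∧ (relGraph (fun a b => R a b ∧ ¬ (a = x ∧ b = y))).Preconnected := by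
  classical
  have hdeg : ∀ u, 2 ≤ (relGraph R).degree u := by
    intro u
    rw [← SimpleGraph.card_neighborSet_eq_degree, ← Nat.card_eq_fintype_card,
      Nat.card_coe_set_eq]
    rcases u with a | b
    · rw [← h.degl a] at hr
      refine hr.trans ?_
      rw [← Set.ncard_image_of_injective {b | R a b} (Sum.inr_injective (α := A))]
      apply Set.ncard_le_ncard _ (Set.toFinite _)
      rintro _ ⟨b, hb, rfl⟩
      simpa [relGraph_lr] using hb
    · rw [← h.degr b] at hk
      refine hk.trans ?_
      rw [← Set.ncard_image_of_injective {a | R a b} (Sum.inl_injective (β := B))]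
      apply Set.ncard_le_ncard _ (Set.toFinite _)
      rintro _ ⟨b, hb, rfl⟩
      simpa [relGraph_rl] using hb
  have hnac : ¬ (relGraph R).IsAcyclic := by
    intro hac
    have a0 : A := Classical.arbitrary A
    have : Nonempty (A ⊕ B) := ⟨Sum.inl a0⟩
    have ht : (relGraph R).IsTree := ⟨⟨h.conn⟩, hac⟩
    have : Nontrivial (A ⊕ B) := by
      have h2 := hdeg (Sum.inl a0)
      have : 0 < (relGraph R).degree (Sum.inl a0) := by omega
      obtain ⟨w, hw⟩ := (SimpleGraph.degree_pos_iff_exists_adj _ _).mp this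
      exact ⟨_, _, hw.ne⟩
    obtain ⟨u, hu⟩ := ht.exists_vert_degree_one_of_nontrivial
    have := hdeg u
    omega
  rw [SimpleGraph.isAcyclic_iff_forall_adj_isBridge] at hnac
  push Not at hnac
  obtain ⟨u, w, huw, hb⟩ := hnac
  have key : ∃ x y, R x y ∧ ¬ (relGraph R).IsBridge s(Sum.inl x, Sum.inr y) := by
    rcases u with u | u <;> rcases w with w | w
    · exact absurd huw (relGraph_ll R _ _)
    · exact ⟨u, w, (relGraph_lr R _ _).mp huw, hb⟩
    · exact ⟨w, u, (relGraph_rl R _ _).mp huw, by rwa [Sym2.eq_swap]⟩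
    · exact absurd huw (relGraph_rr R _ _)
  obtain ⟨x, y, hxy, hb⟩ := key
  refine ⟨x, y, hxy, ?_⟩
  have e : relGraph (fun a b => R a b ∧ ¬ (a = x ∧ b = y))
      = (relGraph R).deleteEdges {s(Sum.inl x, Sum.inr y)} := by
    ext u w
    rcases u with u | u <;> rcases w with w | w <;>
      simp [relGraph_ll, relGraph_lr, relGraph_rl, relGraph_rr]
    intro _
    tauto
  rw [e]
  rw [SimpleGraph.isBridge_iff] at hb
  have hreach : ((relGraph R).deleteEdges {s(Sum.inl x, Sum.inr y)}).Reachable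
      (Sum.inl x) (Sum.inr y) := by
    by_contra hcon
    apply hb
    simpa [relGraph_lr, hxy, SimpleGraph.deleteEdges] using hcon
  intro u w
  obtain ⟨p⟩ := h.conn u w
  induction p with
  | nil => exact Reachable.refl _
  | @cons a b c hab p ih =>
    refine Reachable.trans ?_ ih
    by_cases hs : s(a, b) = s(Sum.inl x, Sum.inr y)
    · rw [Sym2.eq_iff] at hs
      rcases hs with ⟨rfl, rfl⟩ | ⟨rfl, rfl⟩
      · exact hreach
      · exact hreach.symm
    · apply Adj.reachable
      rw [SimpleGraph.deleteEdges_adj]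
      exact ⟨hab, by simpa using hs⟩

/-- The glued relation. -/
def glue {A B P Q T : Type} (R : A → B → Prop) (x : A) (y : B) :
    ((P × Q × T) × A) ⊕ P → ((P × Q × T) × B) ⊕ Q → Prop
  | .inl (c, a), .inl (c', b) => c = c' ∧ R a b ∧ ¬ (a = x ∧ b = y)
  | .inl (c, a), .inr q => a = x ∧ c.2.1 = q
  | .inr p, .inl (c, b) => b = y ∧ c.1 = p
  | .inr _, .inr _ => False

lemma glue_conf {A B P Q T : Type} [Fintype P] [Fintype Q] [Fintype T]
    [Nonempty P] [Nonempty Q] [Nonempty T] {r k : ℕ}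
    {R : A → B → Prop} (h : RelConf r k R) {x : A} {y : B} (hxy : R x y)
    (hc : (relGraph (fun a b => R a b ∧ ¬ (a = x ∧ b = y))).Preconnected)
    (hr : Fintype.card (Q × T) = r) (hk : Fintype.card (P × T) = k) :
    RelConf r k (glue (P := P) (Q := Q) (T := T) R x y) := by
  classical
  refine ⟨?_, ?_, ?_, ?_⟩
  · set H := relGraph (glue (P := P) (Q := Q) (T := T) R x y) with hH
    let φ : (P × Q × T) → (A ⊕ B) → ((((P × Q × T) × A) ⊕ P) ⊕ (((P × Q × T) × B) ⊕ Q)) :=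
      fun c => Sum.elim (fun a => Sum.inl (Sum.inl (c, a))) (fun b => Sum.inr (Sum.inl (c, b)))
    have hφ : ∀ c u w, H.Reachable (φ c u) (φ c w) := by
      intro c u w
      let f : relGraph (fun a b => R a b ∧ ¬ (a = x ∧ b = y)) →g H :=
        { toFun := φ c
          map_rel' := by
            intro u w
            rcases u with u | u <;> rcases w with w | w <;>
              simp +contextual [relGraph_ll, relGraph_lr, relGraph_rl, relGraph_rr, φ, hH, glue] }
      exact (hc u w).map f
    have hN : ∀ c : P × Q × T, H.Adj (Sum.inl (Sum.inr c.1)) (φ c (Sum.inr y)) := by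
      intro c
      simp [φ, hH, relGraph_lr, glue]
    have hM : ∀ c : P × Q × T, H.Adj (φ c (Sum.inl x)) (Sum.inr (Sum.inr c.2.1)) := by
      intro c
      simp [φ, hH, relGraph_lr, glue]
    have t0 : T := Classical.arbitrary T
    have p0 : P := Classical.arbitrary P
    have q0 : Q := Classical.arbitrary Q
    have hNM : ∀ p q, H.Reachable (Sum.inl (Sum.inr p)) (Sum.inr (Sum.inr q)) := fun p q =>
      ((hN (p, q, t0)).reachable.trans (hφ _ _ _)).trans (hM (p, q, t0)).reachable
    have hall : ∀ u, H.Reachable u (Sum.inr (Sum.inr q0)) := by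
      have hcopy : ∀ c u, H.Reachable (φ c u) (Sum.inr (Sum.inr q0)) := fun c u =>
        ((hφ c u _).trans (hN c).reachable.symm).trans (hNM _ _)
      rintro ((⟨c, a⟩ | p) | (⟨c, b⟩ | q))
      · exact hcopy c (Sum.inl a)
      · exact hNM p q0
      · exact hcopy c (Sum.inr b)
      · exact (hNM p0 q).symm.trans (hNM p0 q0)
    exact fun u w => (hall u).trans (hall w).symm
  · rintro (⟨c, a⟩ | p)
    · rw [← h.degl a]
      have : {b | glue R x y (Sum.inl (c, a)) b} =
          (fun b => if a = x ∧ b = y then Sum.inr c.2.1 else Sum.inl (c, b)) '' {b | R a b} := by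
        ext w
        rcases w with ⟨c', b⟩ | q <;> simp only [glue, Set.mem_image, Set.mem_ofPred_eq]
        · constructor
          · rintro ⟨rfl, h1, h2⟩
            exact ⟨b, h1, by rw [if_neg h2]⟩
          · rintro ⟨b', h1, h2⟩
            split_ifs at h2 with h3
            simp only [Sum.inl.injEq, Prod.mk.injEq] at h2
            obtain ⟨rfl, rfl⟩ := h2
            exact ⟨rfl, h1, h3⟩
        · constructor
          · rintro ⟨rfl, rfl⟩
            exact ⟨y, hxy, by simp⟩
          · rintro ⟨b', h1, h2⟩
            split_ifs at h2 with h3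
            exact ⟨h3.1, Sum.inr_injective h2⟩
      rw [this, Set.ncard_image_of_injective]
      intro b b' e
      simp only at e
      split_ifs at e with h1 h2 h2
      · exact h1.2.trans h2.2.symm
      · simpa using e
    · have : {b | glue (P := P) (Q := Q) (T := T) R x y (Sum.inr p) b} =
          Set.range (fun z : Q × T => Sum.inl ((p, z), y)) := by
        ext w
        rcases w with ⟨⟨p', z⟩, b⟩ | q
        · simp [glue]; grind
        · simp [glue]
      rw [this, ← Set.image_univ, Set.ncard_image_of_injective, Set.ncard_univ,
        Nat.card_eq_fintype_card, hr]
      intro z z' e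
      simpa using e
  · rintro (⟨c, b⟩ | q)
    · rw [← h.degr b]
      have : {a | glue R x y a (Sum.inl (c, b))} =
          (fun a => if a = x ∧ b = y then Sum.inr c.1 else Sum.inl (c, a)) '' {a | R a b} := by
        ext w
        rcases w with ⟨c', a⟩ | p <;> simp only [glue, Set.mem_image, Set.mem_ofPred_eq]
        · constructor
          · rintro ⟨rfl, h1, h2⟩
            exact ⟨a, h1, by rw [if_neg h2]⟩
          · rintro ⟨b', h1, h2⟩
            split_ifs at h2 with h3
            simp only [Sum.inl.injEq, Prod.mk.injEq] at h2
            obtain ⟨rfl, rfl⟩ := h2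
            exact ⟨rfl, h1, h3⟩
        · constructor
          · rintro ⟨rfl, rfl⟩
            exact ⟨x, hxy, by simp⟩
          · rintro ⟨b', h1, h2⟩
            split_ifs at h2 with h3
            exact ⟨h3.2, Sum.inr_injective h2⟩
      rw [this, Set.ncard_image_of_injective]
      intro b b' e
      simp only at e
      split_ifs at e with h1 h2 h2
      · exact h1.1.trans h2.1.symm
      · simpa using e
    · have : {a | glue (P := P) (Q := Q) (T := T) R x y a (Sum.inr q)} =
          Set.range (fun z : P × T => Sum.inl ((z.1, q, z.2), x)) := by
        ext w
        rcases w with ⟨⟨p', q', t⟩, b⟩ | p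
        · simp [glue]; grind
        · simp [glue]
      rw [this, ← Set.image_univ, Set.ncard_image_of_injective, Set.ncard_univ,
        Nat.card_eq_fintype_card, hk]
      intro z z' e
      simp at e
      exact Prod.ext e.1 e.2
  · have := h.rect
    rintro (⟨c, a⟩ | p) (⟨c', a'⟩ | p') (⟨d, b⟩ | q) (⟨d', b'⟩ | q') <;>
      simp only [glue] <;> grind

/-- For `r ≥ 3`, `k ≥ 3` and `s = r·k / gcd(r,k)`: if `m` is a positive
integer with `m ∈ D r k`, then `s·m + 1 ∈ D r k`. -/
theorem D_mem_smul_add_one (r k s m : ℕ) (hr : 3 ≤ r) (hk : 3 ≤ k)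
    (hs : s = r * k / Nat.gcd r k) (hm : 0 < m) (h : m ∈ D r k) :
    s * m + 1 ∈ D r k := by
  have hg : 0 < Nat.gcd r k := Nat.gcd_pos_of_pos_left _ (by omega)
  set g := Nat.gcd r k with hgdef
  obtain ⟨r', hr'⟩ : g ∣ r := Nat.gcd_dvd_left r k
  obtain ⟨k', hk'⟩ : g ∣ k := Nat.gcd_dvd_right r k
  have hr0 : 0 < r' := Nat.pos_of_ne_zero (by rintro rfl; simp at hr'; omega)
  have hk0 : 0 < k' := Nat.pos_of_ne_zero (by rintro rfl; simp at hk'; omega)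
  have ek : ∀ d, d * k / g = d * k' := fun d => by
    rw [hk', Nat.mul_left_comm, Nat.mul_div_cancel_left _ hg]
  have er : ∀ d, d * r / g = d * r' := fun d => by
    rw [hr', Nat.mul_left_comm, Nat.mul_div_cancel_left _ hg]
  have hs' : s = g * r' * k' := by rw [hs, ek]; exact congrArg (· * k') hr'
  obtain ⟨G, hG⟩ := h
  have hR := RelConf.of_conf hG
  have hA : 0 < m * k / g := by rw [ek]; positivity
  have : Nonempty (Fin (m * k / g)) := ⟨⟨0, hA⟩⟩
  obtain ⟨x, y, hxy, hc⟩ := hR.exists_nonbridge (by omega) (by omega)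
  have : NeZero r' := ⟨hr0.ne'⟩
  have : NeZero k' := ⟨hk0.ne'⟩
  have : NeZero g := ⟨hg.ne'⟩
  have hfin := glue_conf (P := Fin k') (Q := Fin r') (T := Fin g) hR hxy hc
    (by simp; rw [mul_comm]; exact hr'.symm) (by simp; rw [mul_comm]; exact hk'.symm)
  refine hfin.configurable ?_ ?_
  · rw [← hgdef, ek]
    simp only [Fintype.card_sum, Fintype.card_prod, Fintype.card_fin]
    rw [ek, hs']
    ring
  · rw [← hgdef, er]
    simp only [Fintype.card_sum, Fintype.card_prod, Fintype.card_fin]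
    rw [er, hs']
    ring
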